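/- The exponential generating function of the up-down (alternating) permutation numbers E_n satisfies \sum_{n\ge 0} E_n x^n/n! = \sec x + \tan x. -/

import Mathlib

open scoped BigOperators

/-- A list of integers is *up-down* (alternating) if it rises, falls, rises, ... -/
def IsUpDown (l : List ℤ) : Prop :=
  ∀ i : ℕ, i + 1 < l.length →
    (Even i → l.getD i 0 < l.getD (i + 1) 0) ∧ (¬ Even i → l.getD (i + 1) 0 < l.getD i 0)

/-- A list of integers is *down-up* if it falls, rises, falls, ... -/
def IsDownUp (l : List ℤ) : Prop :=
  ∀ i : ℕ, i + 1 < l.length →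
    (Even i → l.getD (i + 1) 0 < l.getD i 0) ∧ (¬ Even i → l.getD i 0 < l.getD (i + 1) 0)

/-- The list `[1, 2, ..., m]` as integers. -/
def baseList (m : ℕ) : List ℤ := (List.range m).map fun k => (k : ℤ) + 1

/-- The Euler number `E_m`: the number of up-down permutations of `{1, ..., m}`. -/
noncomputable def eulerNum (m : ℕ) : ℕ :=
  Nat.card {l : List ℤ // l.Perm (baseList m) ∧ IsUpDown l}

theorem isUpDown_append_max {u v : List ℤ} {m : ℤ} (hu : ∀ x ∈ u, x < m) (hv : ∀ x ∈ v, x < m) :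
    IsUpDown (u ++ m :: v) ↔
      IsUpDown u ∧ IsUpDown v ∧ (Odd u.length ∨ u.length + v.length = 0) := by
  have left : ∀ i, i < u.length → (u ++ m :: v).getD i 0 = u.getD i 0 := fun i hi => by
    rw [List.getD_append _ _ _ _ hi]
  have mid : (u ++ m :: v).getD u.length 0 = m := by simp
  have right : ∀ i, (u ++ m :: v).getD (u.length + 1 + i) 0 = v.getD i 0 := fun i => by
    rw [List.getD_append_right _ _ _ _ (by omega),
      show u.length + 1 + i - u.length = i + 1 by omega, List.getD_cons_succ]
  have hu' : ∀ i, i < u.length → u.getD i 0 < m := fun i hi => by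
    rw [List.getD_eq_getElem _ _ hi]; exact hu _ (List.getElem_mem hi)
  have hv' : ∀ i, i < v.length → v.getD i 0 < m := fun i hi => by
    rw [List.getD_eq_getElem _ _ hi]; exact hv _ (List.getElem_mem hi)
  have hlen : (u ++ m :: v).length = u.length + 1 + v.length := by simp; omega
  have parity : ∀ {i}, Odd u.length → (Even (u.length + 1 + i) ↔ Even i) := fun h => by
    simp [Nat.even_add, h]
  constructor
  · intro h
    have h3 : Odd u.length ∨ u.length + v.length = 0 := by
      by_contra! hc
      obtain ⟨hodd, hne⟩ := hc
      rw [Nat.not_odd_iff_even] at hodd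
      rcases Nat.eq_zero_or_pos v.length with h0 | hpos
      · obtain ⟨k, hk⟩ : ∃ k, u.length = k + 1 := ⟨u.length - 1, by omega⟩
        have := (h k (by omega)).2 (by rw [hk, Nat.even_add_one] at hodd; exact hodd)
        rw [left k (by omega), ← hk, mid] at this
        exact absurd (hu' k (by omega)) this.not_gt
      · have := (h u.length (by omega)).1 hodd
        rw [mid, ← add_zero (u.length + 1), right] at this
        exact absurd (hv' 0 hpos) this.not_gt
    refine ⟨fun i hi => ?_, fun i hi => ?_, h3⟩
    · have := h i (by omega)
      rwa [left i (by omega), left (i + 1) hi] at this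
    · have := h (u.length + 1 + i) (by omega)
      rwa [right, add_assoc _ i, right, parity (h3.resolve_right (by omega))] at this
  · rintro ⟨h1, h2, h3⟩ i hi
    rw [hlen] at hi
    rcases lt_trichotomy (i + 1) u.length with hlt | heq | hgt
    · rw [left i (by omega), left (i + 1) hlt]
      exact h1 i hlt
    · rw [left i (by omega), heq, mid]
      have : Even i := by grind
      exact ⟨fun _ => hu' i (by omega), fun h => absurd this h⟩
    · rcases Nat.lt_or_ge u.length i with hlt | hge
      · obtain ⟨j, rfl⟩ := Nat.exists_eq_add_of_lt hlt
        rw [add_right_comm u.length j 1, right, add_assoc _ j, right]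
        rw [parity (h3.resolve_right (by omega))]
        exact h2 j (by omega)
      · obtain rfl : i = u.length := by omega
        rw [mid, ← add_zero (u.length + 1), right]
        have hodd := h3.resolve_right (by omega)
        exact ⟨fun he => absurd he (Nat.not_even_iff_odd.2 hodd), fun _ => hv' 0 (by omega)⟩

open Classical in
/-- The up-down arrangements of a finite set of integers. -/
noncomputable def upDowns (s : Finset ℤ) : Finset (List ℤ) :=
  s.val.lists.toFinset.filter IsUpDown

theorem mem_upDowns {s : Finset ℤ} {l : List ℤ} :
    l ∈ upDowns s ↔ l.Nodup ∧ (∀ x, x ∈ l ↔ x ∈ s) ∧ IsUpDown l := by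
  classical
  rw [upDowns, Finset.mem_filter, Multiset.mem_toFinset, Multiset.mem_lists_iff,
    Multiset.quot_mk_to_coe, ← and_assoc]
  refine and_congr_left' ⟨fun h => ?_, fun ⟨h1, h2⟩ => ?_⟩
  · constructor
    · rw [← Multiset.coe_nodup, ← h]; exact s.nodup
    · intro x
      rw [← Multiset.mem_coe, ← h, Finset.mem_val]
  · refine (Multiset.Nodup.ext s.nodup (Multiset.coe_nodup.2 h1)).2 fun x => ?_
    simp [h2]

theorem length_of_mem_upDowns {s : Finset ℤ} {l : List ℤ} (h : l ∈ upDowns s) :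
    l.length = s.card := by
  obtain ⟨h1, h2, -⟩ := mem_upDowns.1 h
  rw [← List.toFinset_card_of_nodup h1]
  congr 1
  ext x
  simp [h2]

theorem upDowns_empty : upDowns ∅ = {[]} := by
  ext l
  rw [mem_upDowns, Finset.mem_singleton]
  constructor
  · rintro ⟨-, h, -⟩
    exact List.eq_nil_iff_forall_not_mem.2 fun x hx => by simpa using (h x).1 hx
  · rintro rfl
    simp [IsUpDown]

theorem card_upDowns_insert {t : Finset ℤ} {m : ℤ} (hm : ∀ x ∈ t, x < m) :
    (upDowns (insert m t)).card =
      ∑ A ∈ t.powerset, if Odd A.card ∨ t.card = 0 then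
        (upDowns A).card * (upDowns (t \ A)).card else 0 := by
  rw [← Finset.sum_filter]
  simp_rw [← Finset.card_product]
  rw [← Finset.card_sigma]
  symm
  refine Finset.card_bij (fun p _ => p.2.1 ++ m :: p.2.2) ?_ ?_ ?_
  · rintro ⟨A, u, v⟩ h
    simp only [Finset.mem_sigma, Finset.mem_filter, Finset.mem_powerset, Finset.mem_product] at h ⊢
    obtain ⟨⟨hA, hodd⟩, hu, hv⟩ := h
    have lu := length_of_mem_upDowns hu
    have lv := length_of_mem_upDowns hv
    obtain ⟨u1, u2, u3⟩ := mem_upDowns.1 hu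
    obtain ⟨v1, v2, v3⟩ := mem_upDowns.1 hv
    rw [mem_upDowns, isUpDown_append_max (fun x hx => hm x (hA ((u2 x).1 hx)))
      (fun x hx => hm x (by grind))]
    refine ⟨?_, ?_, u3, v3, ?_⟩
    · rw [List.nodup_append]
      grind
    · grind
    · have := Finset.card_sdiff_add_card_eq_card hA
      grind
  · rintro ⟨A, u, v⟩ h ⟨A', u', v'⟩ h' heq
    simp only [Finset.mem_sigma, Finset.mem_filter, Finset.mem_powerset, Finset.mem_product,
      mem_upDowns] at h h' heq
    have key := (List.append_cons_inj_of_notMem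
      (a₁ := m) (a₂ := m) (x₁ := u) (x₂ := u') (z₁ := v) (z₂ := v')) (by grind) (by grind)
    have hA : A = A' := by grind
    grind
  · intro l hl
    obtain ⟨h1, h2, h3⟩ := mem_upDowns.1 hl
    obtain ⟨u, v, rfl⟩ := List.append_of_mem ((h2 m).2 (Finset.mem_insert_self m t))
    simp only [List.mem_append, List.mem_cons, Finset.mem_insert] at h2
    have hmt : m ∉ t := fun h => lt_irrefl _ (hm m h)
    have len := length_of_mem_upDowns hl
    rw [Finset.card_insert_of_notMem hmt] at len
    rw [List.nodup_append] at h1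
    have hu : ∀ x ∈ u, x ∈ t := by grind
    have hv : ∀ x ∈ v, x ∈ t := by grind
    rw [isUpDown_append_max (fun x hx => hm x (hu x hx)) (fun x hx => hm x (hv x hx))] at h3
    refine ⟨⟨u.toFinset, u, v⟩, ?_, rfl⟩
    simp only [Finset.mem_sigma, Finset.mem_filter, Finset.mem_powerset, Finset.mem_product,
      mem_upDowns, List.toFinset_card_of_nodup h1.1]
    refine ⟨⟨fun x hx => hu x (List.mem_toFinset.1 hx), by grind⟩, ⟨h1.1, by simp, h3.1⟩,
      (List.nodup_cons.1 h1.2.1).2, fun x => by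
      rw [Finset.mem_sdiff, List.mem_toFinset]
      have := h2 x
      have := h1.2.2 x
      grind, h3.2.1⟩

theorem baseList_eq_map (n : ℕ) :
    baseList n = (List.range n).map fun k : ℕ => (k : ℤ) + 1 := by
  simp [baseList, ← List.map_eq_flatMap, Function.comp_def]

theorem nodup_baseList (n : ℕ) : (baseList n).Nodup := by
  rw [baseList_eq_map]
  exact List.Nodup.map (fun a b h => by simpa using h) List.nodup_range

theorem eulerNum_eq_card_upDowns (n : ℕ) :
    eulerNum n = (upDowns (baseList n).toFinset).card := by
  refine Nat.subtype_card _ fun l => ?_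
  rw [mem_upDowns, ← and_assoc]
  refine and_congr_left' ⟨fun ⟨h1, h2⟩ => ?_, fun h => ⟨h.nodup_iff.2 (nodup_baseList n), fun x => ?_⟩⟩
  · exact (List.perm_ext_iff_of_nodup h1 (nodup_baseList n)).2 fun x => by simpa using h2 x
  · simpa using h.mem_iff

theorem card_baseList_toFinset (n : ℕ) : (baseList n).toFinset.card = n := by
  rw [List.toFinset_card_of_nodup (nodup_baseList n)]
  simp [baseList_eq_map]

theorem card_upDowns_of_forall_lt {n : ℕ}
    (ih : ∀ A : Finset ℤ, A.card ≤ n → (upDowns A).card = eulerNum A.card)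
    {s : Finset ℤ} (hs : s.card = n + 1) :
    (upDowns s).card = ∑ k ∈ Finset.range (n + 1),
      if Odd k ∨ n = 0 then n.choose k * (eulerNum k * eulerNum (n - k)) else 0 := by
  have hne : s.Nonempty := Finset.card_pos.1 (by omega)
  have hmem := s.max'_mem hne
  have hcard : (s.erase (s.max' hne)).card = n := by
    rw [Finset.card_erase_of_mem hmem]; omega
  rw [← Finset.insert_erase hmem,
    card_upDowns_insert fun x hx => Finset.lt_max'_of_mem_erase_max' s hne hx, hcard]
  have := Finset.sum_powerset_apply_card
    (fun k => if Odd k ∨ n = 0 then eulerNum k * eulerNum (n - k) else 0)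
    (x := s.erase (s.max' hne))
  rw [hcard] at this
  simp only [smul_eq_mul, mul_ite, mul_zero] at this
  rw [← this]
  refine Finset.sum_congr rfl fun A hA => ?_
  rw [Finset.mem_powerset] at hA
  have h1 := Finset.card_le_card hA
  have h2 := Finset.card_sdiff_add_card_eq_card hA
  rw [ih A (by omega), ih _ (by omega), show (s.erase (s.max' hne) \ A).card = n - A.card by omega]

theorem card_upDowns (s : Finset ℤ) : (upDowns s).card = eulerNum s.card := by
  induction h : s.card using Nat.strong_induction_on generalizing s with
  | _ n ih =>
    cases n with
    | zero =>
      rw [eulerNum_eq_card_upDowns, Finset.card_eq_zero.1 h]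
      rfl
    | succ n =>
      have ih' : ∀ A : Finset ℤ, A.card ≤ n → (upDowns A).card = eulerNum A.card :=
        fun A hA => ih _ (by omega) A rfl
      rw [eulerNum_eq_card_upDowns, card_upDowns_of_forall_lt ih' h,
        card_upDowns_of_forall_lt ih' (card_baseList_toFinset _)]

theorem eulerNum_zero : eulerNum 0 = 1 := by
  rw [← Finset.card_empty (α := ℤ), ← card_upDowns, upDowns_empty, Finset.card_singleton]

theorem eulerNum_succ (n : ℕ) :
    eulerNum (n + 1) = ∑ k ∈ Finset.range (n + 1),
      if Odd k ∨ n = 0 then n.choose k * (eulerNum k * eulerNum (n - k)) else 0 := by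
  rw [eulerNum_eq_card_upDowns]
  exact card_upDowns_of_forall_lt (fun A _ => card_upDowns A) (card_baseList_toFinset _)

theorem Complex.cos_ne_zero_of_norm_lt {z : ℂ} (hz : ‖z‖ < Real.pi / 2) : Complex.cos z ≠ 0 := by
  rw [Complex.cos_ne_zero_iff]
  rintro k rfl
  have h1 : ((2 * (k : ℂ) + 1) * Real.pi / 2) = (((2 * k + 1 : ℤ) * (Real.pi / 2) : ℝ) : ℂ) := by
    push_cast; ring
  rw [h1, Complex.norm_real, Real.norm_eq_abs, abs_mul, abs_of_pos Real.pi_div_two_pos] at hz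
  have h2 : (1 : ℝ) ≤ |((2 * k + 1 : ℤ) : ℝ)| := by
    rw [← Int.cast_abs]
    exact_mod_cast Int.one_le_abs (by omega)
  nlinarith [Real.pi_div_two_pos]

theorem Complex.hasDerivAt_tan' {z : ℂ} (hz : Complex.cos z ≠ 0) :
    HasDerivAt Complex.tan (1 + Complex.tan z * Complex.tan z) z := by
  convert Complex.hasDerivAt_tan hz using 1
  rw [Complex.tan_eq_sin_div_cos]
  field_simp
  linear_combination Complex.sin_sq_add_cos_sq z

theorem Complex.hasDerivAt_sec_add_tan {z : ℂ} (hz : Complex.cos z ≠ 0) :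
    HasDerivAt (fun w => 1 / Complex.cos w + Complex.tan w)
      (1 + Complex.tan z * (1 / Complex.cos z + Complex.tan z)) z := by
  have h := ((Complex.hasDerivAt_cos z).fun_inv hz).fun_add (Complex.hasDerivAt_tan' hz)
  simp only [one_div]
  refine h.congr_deriv ?_
  rw [Complex.tan_eq_sin_div_cos]
  field_simp
  ring

/-- Leibniz rule for a function satisfying `deriv f = 1 + g * f` near a point. -/
theorem iteratedDeriv_succ_of_hasDerivAt {f g : ℂ → ℂ} {z : ℂ}
    (h : ∀ᶠ w in nhds z, HasDerivAt f (1 + g w * f w) w) (n : ℕ)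
    (hf : ContDiffAt ℂ n f z) (hg : ContDiffAt ℂ n g z) :
    iteratedDeriv (n + 1) f z = (if n = 0 then 1 else 0) + ∑ k ∈ Finset.range (n + 1),
      (n.choose k : ℂ) * iteratedDeriv k g z * iteratedDeriv (n - k) f z := by
  have hd : deriv f =ᶠ[nhds z] fun w => 1 + g w * f w := h.mono fun w hw => hw.deriv
  rw [iteratedDeriv_succ', hd.iteratedDeriv_eq,
    iteratedDeriv_fun_add contDiffAt_const (hg.mul hf), iteratedDeriv_const,
    iteratedDeriv_fun_mul hg hf]

theorem iteratedDeriv_sec_add_tan_zero (n : ℕ) :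
    iteratedDeriv n (fun w => 1 / Complex.cos w + Complex.tan w) 0 = eulerNum n ∧
      iteratedDeriv n Complex.tan 0 = if Odd n then (eulerNum n : ℂ) else 0 := by
  have hcos : ∀ᶠ w in nhds (0 : ℂ), Complex.cos w ≠ 0 :=
    Complex.continuous_cos.continuousAt.eventually_ne (by simp)
  have htan : ∀ k : ℕ, ContDiffAt ℂ k Complex.tan 0 := fun k =>
    Complex.contDiffAt_tan.2 (by simp)
  have hsec : ∀ k : ℕ, ContDiffAt ℂ k (fun w => 1 / Complex.cos w + Complex.tan w) 0 := fun k =>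
    (contDiffAt_const.div Complex.contDiff_cos.contDiffAt (by simp)).add (htan k)
  induction n using Nat.strong_induction_on with
  | _ n ih =>
    cases n with
    | zero => simp [eulerNum_zero]
    | succ n =>
      rw [iteratedDeriv_succ_of_hasDerivAt (hcos.mono fun w => Complex.hasDerivAt_sec_add_tan) n
          (hsec n) (htan n),
        iteratedDeriv_succ_of_hasDerivAt (hcos.mono fun w => Complex.hasDerivAt_tan') n
          (htan n) (htan n)]
      rcases Nat.eq_zero_or_pos n with rfl | hn
      · simp [eulerNum_succ, eulerNum_zero]
      · simp only [hn.ne', if_false, zero_add, eulerNum_succ, or_false]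
        push_cast
        constructor
        · refine Finset.sum_congr rfl fun k hk => ?_
          rw [Finset.mem_range] at hk
          rw [(ih k hk).2, (ih (n - k) (by omega)).1]
          split_ifs <;> ring
        · split_ifs with hodd
          · refine Finset.sum_congr rfl fun k hk => ?_
            rw [Finset.mem_range] at hk
            rw [(ih k hk).2, (ih (n - k) (by omega)).2]
            by_cases hkodd : Odd k
            · have : Odd (n - k) := by grind
              simp [hkodd, this, mul_assoc]
            · simp [hkodd]
          · refine Finset.sum_eq_zero fun k hk => ?_
            rw [Finset.mem_range] at hk
            rw [(ih k hk).2, (ih (n - k) (by omega)).2]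
            by_cases hkodd : Odd k
            · have : ¬ Odd (n - k) := by grind
              simp [this]
            · simp [hkodd]

/-- André's theorem: the EGF of the up-down permutation numbers is sec x + tan x. -/
theorem andre_egf (x : ℝ) (hx : |x| < Real.pi / 2) :
    HasSum (fun n : ℕ => (eulerNum n : ℝ) * x ^ n / n.factorial)
      (1 / Real.cos x + Real.tan x) := by
  have hd : DifferentiableOn ℂ (fun w => 1 / Complex.cos w + Complex.tan w)
      (Metric.ball 0 (Real.pi / 2)) := fun z hz =>
    (Complex.hasDerivAt_sec_add_tan (Complex.cos_ne_zero_of_norm_lt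
      (by simpa using hz))).differentiableAt.differentiableWithinAt
  have h := Complex.hasSum_taylorSeries_on_ball hd (z := (x : ℂ)) (by simpa using hx)
  rw [← Complex.hasSum_ofReal]
  push_cast
  refine h.congr_fun fun n => ?_
  rw [(iteratedDeriv_sec_add_tan_zero n).1, sub_zero, smul_eq_mul, smul_eq_mul]
  ring
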